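/- arXiv:1310.7337 — 4 statements merged into one kernel-verified Lean document; each statement's English description precedes it below -/
import Mathlib

section
/- Let (E₁, E₀, A, B) be a matrix factorization of f ∈ Q and let ∇₀, ∇₁ be connections on E₀, E₁. Define Ā : E₁ ⊕ (Ω¹⊗E₀) → E₀ ⊕ (Ω¹⊗E₁) by Ā(x, w) = (A x, df⊗x − (1⊗B)w) and B̄ : E₀ ⊕ (Ω¹⊗E₁) → E₁ ⊕ (Ω¹⊗E₀) by B̄(y, v) = (B y, df⊗y − (1⊗A)v). Then φ = (φ₁, φ₀) with φ₁(x) = (x, At₁ x) and φ₀(y) = (y, At₀ y) is a strict morphism of matrix factorizations; that is, Ā∘φ₁ = φ₀∘A and B̄∘φ₀ = φ₁∘B, equivalently df⊗x − (1⊗B)(At₁ x) = At₀(A x) for all x ∈ E₁ and df⊗y − (1⊗A)(At₀ y) = At₁(B y) for all y ∈ E₀. -/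
/-!
STATEMENT 1: For a matrix factorization (E₁, E₀, A, B) of f ∈ Q with connections ∇₀, ∇₁
on E₀, E₁, the pair φ = (φ₁, φ₀), φ₁ x = (x, At₁ x), φ₀ y = (y, At₀ y), is a strict
morphism of matrix factorizations into E^(1) = (Q →^{df∧} Ω¹) ⊗_mf E, i.e.
Ā ∘ φ₁ = φ₀ ∘ A and B̄ ∘ φ₀ = φ₁ ∘ B.
-/

open TensorProduct

/-- A connection on a `Q`-module `E` relative to `k`: an additive map
`E → Ω¹_{Q/k} ⊗_Q E` satisfying the Leibniz rule. -/
structure Conn (k Q E : Type*) [CommRing k] [CommRing Q] [Algebra k Q]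
    [AddCommGroup E] [Module Q E] where
  toFun : E → (Ω[Q⁄k] ⊗[Q] E)
  map_add : ∀ x y, toFun (x + y) = toFun x + toFun y
  leibniz : ∀ (q : Q) (x : E),
    toFun (q • x) = (KaehlerDifferential.D k Q) q ⊗ₜ[Q] x + q • toFun x

theorem phi_is_strict_morphism
    (k Q : Type*) [CommRing k] [CommRing Q] [Algebra k Q]
    (E₀ E₁ : Type*) [AddCommGroup E₀] [Module Q E₀] [AddCommGroup E₁] [Module Q E₁]
    [Module.Finite Q E₀] [Module.Projective Q E₀]
    [Module.Finite Q E₁] [Module.Projective Q E₁]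
    (f : Q) (A : E₁ →ₗ[Q] E₀) (B : E₀ →ₗ[Q] E₁)
    (hAB : ∀ y : E₀, A (B y) = f • y) (hBA : ∀ x : E₁, B (A x) = f • x)
    (na0 : Conn k Q E₀) (na1 : Conn k Q E₁)
    -- the Atiyah class components
    (At₁ : E₁ → Ω[Q⁄k] ⊗[Q] E₀) (At₀ : E₀ → Ω[Q⁄k] ⊗[Q] E₁)
    (hAt₁ : ∀ x, At₁ x = na0.toFun (A x) - (LinearMap.lTensor (Ω[Q⁄k]) A) (na1.toFun x))
    (hAt₀ : ∀ y, At₀ y = na1.toFun (B y) - (LinearMap.lTensor (Ω[Q⁄k]) B) (na0.toFun y)) :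
    -- Ā ∘ φ₁ = φ₀ ∘ A
    (∀ x : E₁,
      ((A x, (KaehlerDifferential.D k Q f) ⊗ₜ[Q] x
          - (LinearMap.lTensor (Ω[Q⁄k]) B) (At₁ x)) : E₀ × (Ω[Q⁄k] ⊗[Q] E₁))
        = (A x, At₀ (A x))) ∧
    -- B̄ ∘ φ₀ = φ₁ ∘ B
    (∀ y : E₀,
      ((B y, (KaehlerDifferential.D k Q f) ⊗ₜ[Q] y
          - (LinearMap.lTensor (Ω[Q⁄k]) A) (At₀ y)) : E₁ × (Ω[Q⁄k] ⊗[Q] E₀))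
        = (B y, At₁ (B y))) := by
  have hBA' : ∀ w : Ω[Q⁄k] ⊗[Q] E₁, LinearMap.lTensor (Ω[Q⁄k]) B
      (LinearMap.lTensor (Ω[Q⁄k]) A w) = f • w := by
    intro w
    induction w using TensorProduct.induction_on with
    | zero => simp
    | tmul a b => simp [hBA]
    | add a b ha hb => rw [_root_.map_add, _root_.map_add, ha, hb, smul_add]
  have hAB' : ∀ w : Ω[Q⁄k] ⊗[Q] E₀, LinearMap.lTensor (Ω[Q⁄k]) A
      (LinearMap.lTensor (Ω[Q⁄k]) B w) = f • w := by
    intro w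
    induction w using TensorProduct.induction_on with
    | zero => simp
    | tmul a b => simp [hAB]
    | add a b ha hb => rw [_root_.map_add, _root_.map_add, ha, hb, smul_add]
  refine ⟨fun x => Prod.ext rfl ?_, fun y => Prod.ext rfl ?_⟩
  · change _ - _ = At₀ (A x)
    rw [hAt₁, hAt₀, hBA, na1.leibniz, map_sub, hBA']
    abel
  · change _ - _ = At₁ (B y)
    rw [hAt₁, hAt₀, hAB, na0.leibniz, map_sub, hAB']
    abel
end

section
/- Let (E₁, E₀, A, B) be a matrix factorization of f ∈ Q and let (∇₀, ∇₁) and (∇₀′, ∇₁′) be two pairs of connections on E₀, E₁, with associated strict morphisms φ and φ′ into E^(1) = (Q →^{df∧} Ω¹) ⊗_mf E. Then φ and φ′ are homotopic: the maps α₀ = (0, ∇₀ − ∇₀′) : E₀ → E₁ ⊕ (Ω¹⊗E₀) and α₁ = (0, ∇₁ − ∇₁′) : E₁ → E₀ ⊕ (Ω¹⊗E₁) are Q-linear and satisfy Ā∘α₀ + α₁∘B = φ₀ − φ₀′ and B̄∘α₁ + α₀∘A = φ₁ − φ₁′, where Ā(x, w) = (A x, df⊗x − (1⊗B)w) and B̄(y,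 v) = (B y, df⊗y − (1⊗A)v) are the differentials of E^(1). -/
/-!
STATEMENT 2: The strict morphism φ : E → E^(1) associated to a choice of connections is
independent of the choice of connections up to homotopy: given two pairs of connections,
the maps α₀ = (0, ∇₀ − ∇₀′) and α₁ = (0, ∇₁ − ∇₁′) are Q-linear and give a homotopy
Ā∘α₀ + α₁∘B = φ₀ − φ₀′ and B̄∘α₁ + α₀∘A = φ₁ − φ₁′.
-/

open TensorProduct

theorem phi_independent_of_connection_up_to_homotopy
    (k Q : Type*) [CommRing k] [CommRing Q] [Algebra k Q]
    (E₀ E₁ : Type*) [AddCommGroup E₀] [Module Q E₀] [AddCommGroup E₁] [Module Q E₁]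
    [Module.Finite Q E₀] [Module.Projective Q E₀]
    [Module.Finite Q E₁] [Module.Projective Q E₁]
    (f : Q) (A : E₁ →ₗ[Q] E₀) (B : E₀ →ₗ[Q] E₁)
    (hAB : ∀ y : E₀, A (B y) = f • y) (hBA : ∀ x : E₁, B (A x) = f • x)
    (na0 na0' : Conn k Q E₀) (na1 na1' : Conn k Q E₁)
    -- the differentials Ā, B̄ of E^(1)
    (Abar : E₁ × (Ω[Q⁄k] ⊗[Q] E₀) → E₀ × (Ω[Q⁄k] ⊗[Q] E₁))
    (hAbar : ∀ z, Abar z =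
      (A z.1, (KaehlerDifferential.D k Q f) ⊗ₜ[Q] z.1 - (LinearMap.lTensor (Ω[Q⁄k]) B) z.2))
    (Bbar : E₀ × (Ω[Q⁄k] ⊗[Q] E₁) → E₁ × (Ω[Q⁄k] ⊗[Q] E₀))
    (hBbar : ∀ z, Bbar z =
      (B z.1, (KaehlerDifferential.D k Q f) ⊗ₜ[Q] z.1 - (LinearMap.lTensor (Ω[Q⁄k]) A) z.2))
    -- the strict morphisms φ and φ′ given by the two choices of connections
    (φ₁ φ₁' : E₁ → E₁ × (Ω[Q⁄k] ⊗[Q] E₀)) (φ₀ φ₀' : E₀ → E₀ × (Ω[Q⁄k] ⊗[Q] E₁))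
    (hφ₁ : ∀ x, φ₁ x = (x, na0.toFun (A x) - (LinearMap.lTensor (Ω[Q⁄k]) A) (na1.toFun x)))
    (hφ₁' : ∀ x, φ₁' x = (x, na0'.toFun (A x) - (LinearMap.lTensor (Ω[Q⁄k]) A) (na1'.toFun x)))
    (hφ₀ : ∀ y, φ₀ y = (y, na1.toFun (B y) - (LinearMap.lTensor (Ω[Q⁄k]) B) (na0.toFun y)))
    (hφ₀' : ∀ y, φ₀' y = (y, na1'.toFun (B y) - (LinearMap.lTensor (Ω[Q⁄k]) B) (na0'.toFun y)))
    -- the homotopy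
    (α₀ : E₀ → E₁ × (Ω[Q⁄k] ⊗[Q] E₀)) (α₁ : E₁ → E₀ × (Ω[Q⁄k] ⊗[Q] E₁))
    (hα₀ : ∀ y, α₀ y = (0, na0.toFun y - na0'.toFun y))
    (hα₁ : ∀ x, α₁ x = (0, na1.toFun x - na1'.toFun x)) :
    -- α₀, α₁ are Q-linear
    (∀ (q : Q) (y y' : E₀), α₀ (y + y') = α₀ y + α₀ y' ∧ α₀ (q • y) = q • α₀ y) ∧
    (∀ (q : Q) (x x' : E₁), α₁ (x + x') = α₁ x + α₁ x' ∧ α₁ (q • x) = q • α₁ x) ∧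
    -- the homotopy identities
    (∀ y : E₀, Abar (α₀ y) + α₁ (B y) = φ₀ y - φ₀' y) ∧
    (∀ x : E₁, Bbar (α₁ x) + α₀ (A x) = φ₁ x - φ₁' x) := by
  refine ⟨fun q y y' => ⟨?_, ?_⟩, fun q x x' => ⟨?_, ?_⟩, fun y => ?_, fun x => ?_⟩
  · rw [hα₀, hα₀, hα₀, na0.map_add, na0'.map_add, Prod.mk_add_mk, add_zero]
    congr 1
    abel
  · rw [hα₀, hα₀, na0.leibniz, na0'.leibniz, Prod.smul_mk, smul_zero, smul_sub]
    congr 1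
    abel
  · rw [hα₁, hα₁, hα₁, na1.map_add, na1'.map_add, Prod.mk_add_mk, add_zero]
    congr 1
    abel
  · rw [hα₁, hα₁, na1.leibniz, na1'.leibniz, Prod.smul_mk, smul_zero, smul_sub]
    congr 1
    abel
  · rw [hAbar, hα₀, hα₁, hφ₀, hφ₀', Prod.mk_add_mk, Prod.mk_sub_mk]
    simp only [map_zero, map_sub, TensorProduct.tmul_zero, add_zero, sub_self]
    congr 1
    abel
  · rw [hBbar, hα₁, hα₀, hφ₁, hφ₁', Prod.mk_add_mk, Prod.mk_sub_mk]
    simp only [map_zero, map_sub, TensorProduct.tmul_zero, add_zero, sub_self]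
    congr 1
    abel
end

section
/- Let C denote the two-term complex Q →^{df∧} Ω¹ (Q in degree 0, Ω¹ in degree 1) and let Ω^{(n)}_{Q,df} denote the complex Q → Ω¹ → Ω² → ⋯ → Ωⁿ whose differential in degree m is multiplication by (n−m)·df. Then the wedge map ∧ : C^{⊗n} → Ω^{(n)}_{Q,df}, defined by multiplying the tensor factors together in the exterior algebra, is a map of complexes: for homogeneous elements a₁, …, aₙ of C of total degree m, ∧ applied to the tensor-product differential of a₁⊗⋯⊗aₙ equals (n−m)·df ∧ a₁ ∧ ⋯ ∧ aₙ. -/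
/-!
STATEMENT 3: The wedge map ∧ : (Q →^{df∧} Ω¹)^{⊗n} → Ω^{(n)}_{Q,df} is a map of complexes:
for homogeneous elements a₁, …, aₙ of the two-term complex C = (Q →^{df∧} Ω¹) of total
degree m, applying ∧ to the (Koszul-signed) tensor-product differential of a₁ ⊗ ⋯ ⊗ aₙ
equals (n − m)·df ∧ a₁ ∧ ⋯ ∧ aₙ.

A homogeneous elementary tensor is recorded by the set S ⊆ Fin n of positions of degree 1
(so m = #S), one-forms ω i for i ∈ S and scalars q i for i ∉ S; the corresponding factor in
the exterior algebra is ι(ω i) (degree 1) resp. algebraMap (q i) (degree 0), the wedge is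
the ordered product of the factors, the differential ∂ sends a degree-0 factor q to
df ∧ q = q • df (in degree 1) and kills degree-1 factors, and the Koszul sign of position i
is (−1)^{#(S ∩ [0,i))}.
-/

open TensorProduct

theorem wedge_aux {A : Type*} [Ring A] (x : A) (n : ℕ) :
    ∀ (b : Fin n → A) (ε : Fin n → ℤ) (_ : ∀ j, x * b j = ε j • (b j * x)) (i : Fin n),
    (∏ j, if j < i then ε j else 1) • (List.ofFn (Function.update b i (x * b i))).prod
      = x * (List.ofFn b).prod := by
  induction n with
  | zero => intro b ε h i; exact i.elim0
  | succ n ih =>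
    intro b ε h i
    refine Fin.cases ?_ (fun i => ?_) i
    · simp [List.ofFn_succ, mul_assoc]
    · have key := ih (fun j => b j.succ) (fun j => ε j.succ) (fun j => h j.succ) i
      have e : (fun j : Fin n => Function.update b i.succ (x * b i.succ) j.succ)
          = Function.update (fun j : Fin n => b j.succ) i (x * b i.succ) := by
        funext j
        by_cases hj : j = i
        · subst hj; simp
        · simp [Function.update_of_ne, hj]
      have e0 : Function.update b i.succ (x * b i.succ) 0 = b 0 :=
        Function.update_of_ne (Fin.succ_ne_zero i).symm _ _
      rw [List.ofFn_succ, List.ofFn_succ, List.prod_cons, List.prod_cons, e, e0,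
        Fin.prod_univ_succ, if_pos (Fin.succ_pos i), mul_smul, ← mul_smul_comm]
      simp only [Fin.succ_lt_succ_iff]
      rw [key, ← mul_assoc, ← mul_assoc, ← smul_mul_assoc, h 0]

theorem wedge_is_chain_map
    (k Q : Type*) [CommRing k] [CommRing Q] [Algebra k Q]
    (f : Q) (n : ℕ) (S : Finset (Fin n)) (ω : Fin n → Ω[Q⁄k]) (q : Fin n → Q)
    (b : Fin n → ExteriorAlgebra Q (Ω[Q⁄k]))
    (hb : ∀ i, b i = if i ∈ S then ExteriorAlgebra.ι Q (ω i)
      else algebraMap Q (ExteriorAlgebra Q (Ω[Q⁄k])) (q i)) :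
    -- ∧ ∘ ∂ applied to the elementary tensor …
    ∑ i ∈ Sᶜ, ((-1 : ℤ) ^ (S ∩ Finset.Iio i).card) •
        (List.ofFn (Function.update b i
          (ExteriorAlgebra.ι Q (q i • KaehlerDifferential.D k Q f)))).prod
      -- … equals (n − m)·df ∧ a₁ ∧ ⋯ ∧ aₙ
      = (n - S.card) •
        (ExteriorAlgebra.ι Q (KaehlerDifferential.D k Q f) * (List.ofFn b).prod) := by
  set x := ExteriorAlgebra.ι Q (KaehlerDifferential.D k Q f) with hx
  have h : ∀ j, x * b j = (if j ∈ S then (-1 : ℤ) else 1) • (b j * x) := by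
    intro j
    rw [hb j]
    split_ifs
    · rw [neg_one_smul]
      exact eq_neg_of_add_eq_zero_left (ExteriorAlgebra.ι_add_mul_swap _ _)
    · rw [one_smul]
      exact (Algebra.commutes _ _).symm
  have hc : (n - S.card) = (Sᶜ).card := by rw [Finset.card_compl, Fintype.card_fin]
  rw [hc, ← Finset.sum_const]
  refine Finset.sum_congr rfl fun i hi => ?_
  rw [← wedge_aux x n b _ h i]
  have hi' : i ∉ S := Finset.mem_compl.mp hi
  have h1 : ExteriorAlgebra.ι Q (q i • KaehlerDifferential.D k Q f) = x * b i := by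
    rw [hb i, if_neg hi', map_smul, Algebra.smul_def, Algebra.commutes]
  have h2 : (∏ j, if j < i then (if j ∈ S then (-1 : ℤ) else 1) else 1)
      = (-1 : ℤ) ^ (S ∩ Finset.Iio i).card := by
    rw [← Finset.prod_const, ← Finset.prod_filter, ← Finset.prod_filter]
    congr 1
    ext j
    simp [and_comm]
  rw [h1, h2]
end

section
/- Let E = (E₁, E₀, A, B) and E′ = (E′₁, E′₀, C, D) be matrix factorizations of f ∈ Q, with connections ∇₀, ∇₁ on E₀, E₁ and ∇₀′, ∇₁′ on E′₀, E′₁, and let β = (β₀, β₁) : E′ → E be a strict morphism. Then the strict morphisms φ̃_E ∘ β and (1⊗β) ∘ φ̃_{E′} from E′ to (Q →^{df∧} Ω¹) ⊗_mf E are homotopic; explicitly, the Q-linear maps ψ₀ = (0, ∇₀∘β₀ − (1⊗β₀)∘∇₀′) and ψ₁ = (0, ∇₁∘β₁ − (1⊗β₁)∘∇₁′) form a homotopy between them. -/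
/-!
STATEMENT 11: For a strict morphism β : E′ → E of matrix factorizations of f and choices
of connections on both, the strict morphisms φ̃_E ∘ β and (1⊗β) ∘ φ̃_{E′} from E′ to
(Q →^{df∧} Ω¹) ⊗_mf E are homotopic, via ψ₀ = (0, ∇₀∘β₀ − (1⊗β₀)∘∇₀′) and
ψ₁ = (0, ∇₁∘β₁ − (1⊗β₁)∘∇₁′).
-/

open TensorProduct

theorem phi_tilde_commutes_with_strict_morphisms_up_to_homotopy
    (k Q : Type*) [CommRing k] [CommRing Q] [Algebra k Q]
    (E₀ E₁ E₀' E₁' : Type*)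
    [AddCommGroup E₀] [Module Q E₀] [AddCommGroup E₁] [Module Q E₁]
    [AddCommGroup E₀'] [Module Q E₀'] [AddCommGroup E₁'] [Module Q E₁']
    [Module.Finite Q E₀] [Module.Projective Q E₀]
    [Module.Finite Q E₁] [Module.Projective Q E₁]
    [Module.Finite Q E₀'] [Module.Projective Q E₀']
    [Module.Finite Q E₁'] [Module.Projective Q E₁']
    (f : Q)
    -- the matrix factorization E = (E₁ -A→ E₀ -B→ E₁)
    (A : E₁ →ₗ[Q] E₀) (B : E₀ →ₗ[Q] E₁)
    (hAB : ∀ y, A (B y) = f • y) (hBA : ∀ x, B (A x) = f • x)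
    -- the matrix factorization E′ = (E₁′ -C→ E₀′ -D→ E₁′)
    (C : E₁' →ₗ[Q] E₀') (D : E₀' →ₗ[Q] E₁')
    (hCD : ∀ y, C (D y) = f • y) (hDC : ∀ x, D (C x) = f • x)
    -- a strict morphism β : E′ → E
    (β₀ : E₀' →ₗ[Q] E₀) (β₁ : E₁' →ₗ[Q] E₁)
    (hβA : ∀ x : E₁', A (β₁ x) = β₀ (C x)) (hβB : ∀ y : E₀', B (β₀ y) = β₁ (D y))
    -- connections on E and E′
    (na0 : Conn k Q E₀) (na1 : Conn k Q E₁) (na0' : Conn k Q E₀') (na1' : Conn k Q E₁')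
    -- the differentials Ā, B̄ of (Q →^{df∧} Ω¹) ⊗_mf E
    (Abar : E₁ × (Ω[Q⁄k] ⊗[Q] E₀) → E₀ × (Ω[Q⁄k] ⊗[Q] E₁))
    (hAbar : ∀ z, Abar z =
      (A z.1, (KaehlerDifferential.D k Q f) ⊗ₜ[Q] z.1 - (LinearMap.lTensor (Ω[Q⁄k]) B) z.2))
    (Bbar : E₀ × (Ω[Q⁄k] ⊗[Q] E₁) → E₁ × (Ω[Q⁄k] ⊗[Q] E₀))
    (hBbar : ∀ z, Bbar z =
      (B z.1, (KaehlerDifferential.D k Q f) ⊗ₜ[Q] z.1 - (LinearMap.lTensor (Ω[Q⁄k]) A) z.2))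
    -- φ̃_E ∘ β  (in components)
    (Φ₁ : E₁' → E₁ × (Ω[Q⁄k] ⊗[Q] E₀)) (Φ₀ : E₀' → E₀ × (Ω[Q⁄k] ⊗[Q] E₁))
    (hΦ₁ : ∀ x, Φ₁ x = (β₁ x,
      na0.toFun (A (β₁ x)) - (LinearMap.lTensor (Ω[Q⁄k]) A) (na1.toFun (β₁ x))))
    (hΦ₀ : ∀ y, Φ₀ y = (β₀ y,
      na1.toFun (B (β₀ y)) - (LinearMap.lTensor (Ω[Q⁄k]) B) (na0.toFun (β₀ y))))
    -- (1⊗β) ∘ φ̃_{E′}  (in components)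
    (Ψ₁ : E₁' → E₁ × (Ω[Q⁄k] ⊗[Q] E₀)) (Ψ₀ : E₀' → E₀ × (Ω[Q⁄k] ⊗[Q] E₁))
    (hΨ₁ : ∀ x, Ψ₁ x = (β₁ x, (LinearMap.lTensor (Ω[Q⁄k]) β₀)
      (na0'.toFun (C x) - (LinearMap.lTensor (Ω[Q⁄k]) C) (na1'.toFun x))))
    (hΨ₀ : ∀ y, Ψ₀ y = (β₀ y, (LinearMap.lTensor (Ω[Q⁄k]) β₁)
      (na1'.toFun (D y) - (LinearMap.lTensor (Ω[Q⁄k]) D) (na0'.toFun y))))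
    -- the homotopy maps
    (ψ₀ : E₀' → E₁ × (Ω[Q⁄k] ⊗[Q] E₀)) (ψ₁ : E₁' → E₀ × (Ω[Q⁄k] ⊗[Q] E₁))
    (hψ₀ : ∀ y, ψ₀ y = (0,
      na0.toFun (β₀ y) - (LinearMap.lTensor (Ω[Q⁄k]) β₀) (na0'.toFun y)))
    (hψ₁ : ∀ x, ψ₁ x = (0,
      na1.toFun (β₁ x) - (LinearMap.lTensor (Ω[Q⁄k]) β₁) (na1'.toFun x))) :
    -- ψ₀ and ψ₁ are Q-linear
    (∀ (q : Q) (y y' : E₀'), ψ₀ (y + y') = ψ₀ y + ψ₀ y' ∧ ψ₀ (q • y) = q • ψ₀ y) ∧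
    (∀ (q : Q) (x x' : E₁'), ψ₁ (x + x') = ψ₁ x + ψ₁ x' ∧ ψ₁ (q • x) = q • ψ₁ x) ∧
    -- the homotopy identities
    (∀ y : E₀', Abar (ψ₀ y) + ψ₁ (D y) = Φ₀ y - Ψ₀ y) ∧
    (∀ x : E₁', Bbar (ψ₁ x) + ψ₀ (C x) = Φ₁ x - Ψ₁ x) := by
  have hA : ∀ t, (LinearMap.lTensor (Ω[Q⁄k]) A) ((LinearMap.lTensor (Ω[Q⁄k]) β₁) t) =
      (LinearMap.lTensor (Ω[Q⁄k]) β₀) ((LinearMap.lTensor (Ω[Q⁄k]) C) t) := by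
    intro t
    rw [← LinearMap.lTensor_comp_apply, ← LinearMap.lTensor_comp_apply,
      show A ∘ₗ β₁ = β₀ ∘ₗ C from LinearMap.ext hβA]
  have hB : ∀ t, (LinearMap.lTensor (Ω[Q⁄k]) B) ((LinearMap.lTensor (Ω[Q⁄k]) β₀) t) =
      (LinearMap.lTensor (Ω[Q⁄k]) β₁) ((LinearMap.lTensor (Ω[Q⁄k]) D) t) := by
    intro t
    rw [← LinearMap.lTensor_comp_apply, ← LinearMap.lTensor_comp_apply,
      show B ∘ₗ β₀ = β₁ ∘ₗ D from LinearMap.ext hβB]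
  refine ⟨fun q y y' => ⟨?_, ?_⟩, fun q x x' => ⟨?_, ?_⟩, fun y => ?_, fun x => ?_⟩
  · rw [hψ₀, hψ₀, hψ₀, Prod.mk_add_mk, add_zero, map_add, na0.map_add, na0'.map_add, map_add]
    congr 1; abel
  · rw [hψ₀, hψ₀, Prod.smul_mk, smul_zero, map_smul, na0.leibniz, na0'.leibniz, map_add,
      LinearMap.lTensor_tmul, map_smul, smul_sub]
    congr 1; abel
  · rw [hψ₁, hψ₁, hψ₁, Prod.mk_add_mk, add_zero, map_add, na1.map_add, na1'.map_add, map_add]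
    congr 1; abel
  · rw [hψ₁, hψ₁, Prod.smul_mk, smul_zero, map_smul, na1.leibniz, na1'.leibniz, map_add,
      LinearMap.lTensor_tmul, map_smul, smul_sub]
    congr 1; abel
  · rw [hAbar, hψ₀, hψ₁, hΦ₀, hΨ₀, Prod.mk_add_mk, Prod.mk_sub_mk]
    dsimp only
    rw [map_zero, add_zero, sub_self, tmul_zero, map_sub, map_sub, hB, hβB]
    congr 1; abel
  · rw [hBbar, hψ₁, hψ₀, hΦ₁, hΨ₁, Prod.mk_add_mk, Prod.mk_sub_mk]
    dsimp only
    rw [map_zero, add_zero, sub_self, tmul_zero, map_sub, map_sub, hA, hβA]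
    congr 1; abel
end
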